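/- Let n ≥ 1 and let μ satisfy 2μ ≥ n. Let λ, Λ > 0, let A be a C¹ matrix-valued map on ℝⁿ satisfying the uniform ellipticity condition with constants λ, Λ, and let w : ℝⁿ → ℂ be C² and satisfy the self-similar profile equation div(A∇w)(x) = (1/2)(i·w(x) + μ·w(x) + x·∇w(x)) for all x ∈ ℝⁿ. If there exists M > 0 such that |w(x)| ≤ M(1+|x|)^{−μ} for all x ∈ ℝⁿ, then there exists a constant C' > 0, depending only on n, μ, λ, Λ, M, such that ∫_{B_R} |∇w|² dx ≤ C' R^{n−2μ−2} for every R ≥ 1, where B_R is the open ball of radius R centered at the origin. -/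

import Mathlib

open MeasureTheory
open scoped BigOperators

noncomputable section

/-- The `k`-th partial derivative of `w : ℝⁿ → ℂ`. -/
def pdC {n : ℕ} (w : EuclideanSpace ℝ (Fin n) → ℂ) (x : EuclideanSpace ℝ (Fin n))
    (k : Fin n) : ℂ :=
  fderiv ℝ w x (EuclideanSpace.single k 1)

/-- `div(A ∇w)(x) = ∑ₖ ∂ₖ (∑ₗ A_{kl} ∂ₗ w)(x)`. -/
def divAgrad {n : ℕ} (A : EuclideanSpace ℝ (Fin n) → Matrix (Fin n) (Fin n) ℂ)
    (w : EuclideanSpace ℝ (Fin n) → ℂ) (x : EuclideanSpace ℝ (Fin n)) : ℂ :=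
  ∑ k, fderiv ℝ (fun y => ∑ l, A y k l * pdC w y l) x (EuclideanSpace.single k 1)

/-- Uniform ellipticity with constants `lam, Lam` at every point of `ℝⁿ`. -/
def UniformlyElliptic {n : ℕ} (A : EuclideanSpace ℝ (Fin n) → Matrix (Fin n) (Fin n) ℂ)
    (lam Lam : ℝ) : Prop :=
  ∀ x, ∀ p : Fin n → ℂ,
    lam * ∑ k, ‖p k‖ ^ 2 ≤ (∑ k, ∑ l, A x k l * p k * (starRingEnd ℂ) (p l)).re ∧
    ∑ k, ‖(A x).mulVec p k‖ ^ 2 ≤ Lam ^ 2 * ∑ k, ‖p k‖ ^ 2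

/-!
The proof is a Caccioppoli estimate with a favourable drift term. For a solution `w`, the energy
field `V = Re (w̄ A∇w) - x |w|² / 4` satisfies
`div V = Re (A∇w · ∇w̄) + (μ/2 - n/4) |w|² ≥ λ |∇w|²`, because `2μ ≥ n` (`le_div_energyField`).
Integrating against `φ²`, where `φ` is a cutoff equal to `1` on `B_R` and supported in `B_{√2 R}`,
gives `λ ∫ φ² |∇w|² ≤ - ∫ ∇(φ²) · V`. Since `φ` is radially nonincreasing, the part of `V` along `x`
contributes with a favourable sign, so no error of size `|w|²` without the factor `R⁻²` survives;
the flux part is absorbed by Young's inequality at the price of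
`C R⁻² ∫ |w|²` over the annulus `R ≤ |x| ≤ √2 R` (`neg_grad_cutoff_mul_energyField_le`). There
`|w|² ≤ M² R^{-2μ}` (`error_le`), and the annulus has volume `O(Rⁿ)`.
-/

/-! ### Calculus preliminaries -/

/-- The smooth transition is nondecreasing with bounded derivative, and its derivative vanishes
off `[0, 1]`. -/
lemma smoothTransition_deriv_facts : ∃ K : ℝ, 0 < K ∧ ∀ t : ℝ,
    0 ≤ deriv Real.smoothTransition t ∧ deriv Real.smoothTransition t ≤ K ∧
    (deriv Real.smoothTransition t ≠ 0 → 0 ≤ t ∧ t ≤ 1) := by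
  have hsupp : ∀ t : ℝ, deriv Real.smoothTransition t ≠ 0 → 0 ≤ t ∧ t ≤ 1 := by
    intro t ht
    by_contra hcon
    apply ht
    by_cases h0 : t < 0
    · have : Real.smoothTransition =ᶠ[nhds t] fun _ => (0 : ℝ) := by
        filter_upwards [Iio_mem_nhds h0] with s hs
        exact Real.smoothTransition.zero_of_nonpos (le_of_lt hs)
      rw [this.deriv_eq]; simp
    · have h1 : 1 < t := by
        by_contra h1
        exact hcon ⟨not_lt.mp h0, not_lt.mp h1⟩
      have : Real.smoothTransition =ᶠ[nhds t] fun _ => (1 : ℝ) := by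
        filter_upwards [Ioi_mem_nhds h1] with s hs
        exact Real.smoothTransition.one_of_one_le (le_of_lt hs)
      rw [this.deriv_eq]; simp
  have hcont : Continuous (deriv Real.smoothTransition) :=
    (Real.smoothTransition.contDiff (n := 1)).continuous_deriv le_rfl
  obtain ⟨C, hC⟩ := (isCompact_Icc (a := (0 : ℝ)) (b := 1)).exists_bound_of_continuousOn
    hcont.continuousOn
  refine ⟨max C 1, by positivity, fun t => ⟨?_, ?_, hsupp t⟩⟩
  · exact Real.smoothTransition.monotone.deriv_nonneg
  · by_cases ht : deriv Real.smoothTransition t = 0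
    · rw [ht]; positivity
    · exact (le_abs_self _).trans ((hC t (hsupp t ht)).trans (le_max_left _ _))

/-- Integration by parts against a compactly supported `C¹` function. -/
lemma integral_mul_fderiv_compact {n : ℕ} {ψ V : EuclideanSpace ℝ (Fin n) → ℝ}
    (hψ : ContDiff ℝ 1 ψ) (hc : HasCompactSupport ψ) (hV : ContDiff ℝ 1 V)
    (v : EuclideanSpace ℝ (Fin n)) :
    Integrable (fun x => ψ x * fderiv ℝ V x v) ∧
    Integrable (fun x => fderiv ℝ ψ x v * V x) ∧
    ∫ x, ψ x * fderiv ℝ V x v = - ∫ x, fderiv ℝ ψ x v * V x := by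
  have hV' : Continuous fun x => fderiv ℝ V x v :=
    (hV.continuous_fderiv one_ne_zero).clm_apply continuous_const
  have hψ' : Continuous fun x => fderiv ℝ ψ x v :=
    (hψ.continuous_fderiv one_ne_zero).clm_apply continuous_const
  have hc' : HasCompactSupport fun x => fderiv ℝ ψ x v := hc.fderiv_apply (𝕜 := ℝ) v
  have i1 : Integrable (fun x => ψ x * fderiv ℝ V x v) :=
    (hψ.continuous.mul hV').integrable_of_hasCompactSupport hc.mul_right
  have i2 : Integrable (fun x => fderiv ℝ ψ x v * V x) :=
    (hψ'.mul hV.continuous).integrable_of_hasCompactSupport hc'.mul_right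
  refine ⟨i1, i2, ?_⟩
  exact integral_mul_fderiv_eq_neg_fderiv_mul_of_integrable i2 i1
    ((hψ.continuous.mul hV.continuous).integrable_of_hasCompactSupport hc.mul_right)
    (fun x _ => hψ.differentiable one_ne_zero x) (fun x _ => hV.differentiable one_ne_zero x)

/-! ### The energy field and its divergence -/

/-- The `k`-th component of the flux `A ∇w`. -/
def flux {n : ℕ} (A : EuclideanSpace ℝ (Fin n) → Matrix (Fin n) (Fin n) ℂ)
    (w : EuclideanSpace ℝ (Fin n) → ℂ) (k : Fin n) (y : EuclideanSpace ℝ (Fin n)) : ℂ :=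
  ∑ l, A y k l * pdC w y l

/-- The `k`-th component of the energy field `Re (w̄ (A∇w - x w / 4))`. The correction
`- x |w|² / 4` absorbs the drift term `x · ∇w` of the equation into the divergence. -/
def energyField {n : ℕ} (A : EuclideanSpace ℝ (Fin n) → Matrix (Fin n) (Fin n) ℂ)
    (w : EuclideanSpace ℝ (Fin n) → ℂ) (k : Fin n) (y : EuclideanSpace ℝ (Fin n)) : ℝ :=
  ((starRingEnd ℂ) (w y) * (flux A w k y - (1 / 4) * ((y k : ℝ) : ℂ) * w y)).re

section
variable {n : ℕ} {A : EuclideanSpace ℝ (Fin n) → Matrix (Fin n) (Fin n) ℂ}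
  {w : EuclideanSpace ℝ (Fin n) → ℂ}

lemma contDiff_pdC (hw : ContDiff ℝ 2 w) (k : Fin n) : ContDiff ℝ 1 fun y => pdC w y k :=
  (hw.fderiv_right (m := 1) (by norm_num)).clm_apply contDiff_const

lemma contDiff_flux (hA : ∀ k l : Fin n, ContDiff ℝ 1 fun x => A x k l)
    (hw : ContDiff ℝ 2 w) (k : Fin n) : ContDiff ℝ 1 (flux A w k) :=
  ContDiff.sum fun l _ => (hA k l).mul (contDiff_pdC hw l)

lemma contDiff_energyField (hA : ∀ k l : Fin n, ContDiff ℝ 1 fun x => A x k l)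
    (hw : ContDiff ℝ 2 w) (k : Fin n) : ContDiff ℝ 1 (energyField A w k) := by
  have hw1 : ContDiff ℝ 1 w := hw.of_le (by norm_num)
  have hx : ContDiff ℝ 1 fun y : EuclideanSpace ℝ (Fin n) => ((y k : ℝ) : ℂ) :=
    Complex.ofRealCLM.contDiff.comp (EuclideanSpace.proj (𝕜 := ℝ) k).contDiff
  exact Complex.reCLM.contDiff.comp ((Complex.conjCLE.contDiff.comp hw1).mul
    ((contDiff_flux hA hw k).sub ((contDiff_const.mul hx).mul hw1)))

lemma fderiv_energyField (hA : ∀ k l : Fin n, ContDiff ℝ 1 fun x => A x k l)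
    (hw : ContDiff ℝ 2 w) (k : Fin n) (x : EuclideanSpace ℝ (Fin n)) :
    fderiv ℝ (energyField A w k) x (EuclideanSpace.single k 1) =
      ((starRingEnd ℂ) (w x) * (fderiv ℝ (flux A w k) x (EuclideanSpace.single k 1)
          - (1 / 4) * w x - (1 / 4) * (x k : ℂ) * pdC w x k)
        + (starRingEnd ℂ) (pdC w x k) * (flux A w k x - (1 / 4) * (x k : ℂ) * w x)).re := by
  have hwd : HasFDerivAt w (fderiv ℝ w x) x :=
    (hw.differentiable (by norm_num) x).hasFDerivAt
  have hB : HasFDerivAt (flux A w k) (fderiv ℝ (flux A w k) x) x :=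
    ((contDiff_flux hA hw k).differentiable one_ne_zero x).hasFDerivAt
  have hx : HasFDerivAt (fun y : EuclideanSpace ℝ (Fin n) => ((y k : ℝ) : ℂ))
      (Complex.ofRealCLM.comp (EuclideanSpace.proj (𝕜 := ℝ) k)) x :=
    (Complex.ofRealCLM.comp (EuclideanSpace.proj (𝕜 := ℝ) k)).hasFDerivAt
  have hconj : HasFDerivAt (fun y => (starRingEnd ℂ) (w y))
      ((Complex.conjCLE : ℂ →L[ℝ] ℂ).comp (fderiv ℝ w x)) x :=
    (Complex.conjCLE : ℂ →L[ℝ] ℂ).hasFDerivAt.comp x hwd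
  have hU := hconj.mul (hB.sub ((hx.const_mul (1 / 4 : ℂ)).mul hwd))
  have hV : HasFDerivAt (energyField A w k) _ x := Complex.reCLM.hasFDerivAt.comp x hU
  rw [hV.fderiv]
  simp [pdC]
  ring

/-- The energy field of a solution has divergence `Re(A∇w · ∇w̄) + (μ/2 - n/4)|w|²`, which
ellipticity and `2μ ≥ n` bound below by `λ|∇w|²`. -/
lemma le_div_energyField {μ lam Lam : ℝ} (hμ : (n : ℝ) ≤ 2 * μ)
    (hA : ∀ k l : Fin n, ContDiff ℝ 1 fun x => A x k l) (hell : UniformlyElliptic A lam Lam)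
    (hw : ContDiff ℝ 2 w) (x : EuclideanSpace ℝ (Fin n))
    (heq : divAgrad A w x =
      (1 / 2) * (Complex.I * w x + (μ : ℂ) * w x + ∑ k, (x k : ℂ) * pdC w x k)) :
    lam * ∑ k, ‖pdC w x k‖ ^ 2 ≤
      ∑ k, fderiv ℝ (energyField A w k) x (EuclideanSpace.single k 1) := by
  -- `UniformlyElliptic` pairs the first index of `A` with `p`, so it is applied to `p = conj ∇w`.
  have h1 := (hell x (fun k => (starRingEnd ℂ) (pdC w x k))).1
  have h2 : (∑ k, ∑ l, A x k l * (starRingEnd ℂ) (pdC w x k)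
      * (starRingEnd ℂ) ((starRingEnd ℂ) (pdC w x l))) =
      ∑ k, (starRingEnd ℂ) (pdC w x k) * flux A w k x := by
    refine Finset.sum_congr rfl fun k _ => ?_
    rw [flux, Finset.mul_sum]
    refine Finset.sum_congr rfl fun l _ => ?_
    rw [Complex.conj_conj]; ring
  rw [h2] at h1
  simp only [RCLike.norm_conj] at h1
  have hdiv : ∑ k, fderiv ℝ (flux A w k) x (EuclideanSpace.single k 1) = divAgrad A w x := rfl
  set S : ℂ := ∑ k, (x k : ℂ) * pdC w x k with hS
  have hSc : (starRingEnd ℂ) S = ∑ k, (x k : ℂ) * (starRingEnd ℂ) (pdC w x k) := by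
    rw [hS, map_sum]; simp
  have hsum : ∑ k, fderiv ℝ (energyField A w k) x (EuclideanSpace.single k 1) =
      ((∑ k, (starRingEnd ℂ) (pdC w x k) * flux A w k x)
        + (starRingEnd ℂ) (w x) * (divAgrad A w x - (n : ℂ) * ((1 / 4) * w x) - (1 / 4) * S)
        - (1 / 4) * w x * (starRingEnd ℂ) S).re := by
    simp only [fderiv_energyField hA hw]
    rw [← Complex.re_sum, ← hdiv, hSc, hS]
    congr 1
    simp only [mul_sub, Finset.sum_add_distrib, Finset.sum_sub_distrib, Finset.mul_sum,
      Finset.sum_const, Finset.card_univ, Fintype.card_fin, nsmul_eq_mul]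
    have e1 : ∀ k, (starRingEnd ℂ) (w x) * (1 / 4 * (x k : ℂ) * pdC w x k) =
      (starRingEnd ℂ) (w x) * (1 / 4 * ((x k : ℂ) * pdC w x k)) := fun k => by ring
    have e2 : ∀ k, (starRingEnd ℂ) (pdC w x k) * (1 / 4 * (x k : ℂ) * w x) =
      1 / 4 * w x * ((x k : ℂ) * (starRingEnd ℂ) (pdC w x k)) := fun k => by ring
    simp only [e1, e2]
    ring
  rw [hsum, heq]
  refine h1.trans ?_
  rw [Complex.sub_re, Complex.add_re]
  have : 0 ≤ ((2 * μ - n) / 4) * ((w x).re ^ 2 + (w x).im ^ 2) := by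
    have : 0 ≤ (2 * μ - n) := by linarith
    positivity
  simp
  nlinarith [this]

/-! ### The radial cutoff -/

/-- The cutoff `η(2 - |x|²/R²)`, with `η` the smooth transition: it equals `1` on `B_R` and
vanishes for `|x| ≥ √2 R`. -/
def cutoff (n : ℕ) (R : ℝ) (x : EuclideanSpace ℝ (Fin n)) : ℝ :=
  Real.smoothTransition (2 - ‖x‖ ^ 2 / R ^ 2)

lemma contDiff_cutoff (R : ℝ) : ContDiff ℝ 1 (cutoff n R) :=
  Real.smoothTransition.contDiff.comp (contDiff_const.sub ((contDiff_norm_sq ℝ).div_const _))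

lemma hasCompactSupport_cutoff {R : ℝ} (hR : 0 < R) : HasCompactSupport (cutoff n R) := by
  refine HasCompactSupport.intro (isCompact_closedBall (0 : EuclideanSpace ℝ (Fin n)) (2 * R)) ?_
  intro x hx
  have hx' : 2 * R < ‖x‖ := by simpa using hx
  apply Real.smoothTransition.zero_of_nonpos
  rw [sub_nonpos, le_div_iff₀ (by positivity)]
  nlinarith

lemma cutoff_eq_one {R : ℝ} (hR : 0 < R) {x : EuclideanSpace ℝ (Fin n)} (hx : ‖x‖ < R) :
    cutoff n R x = 1 := by
  apply Real.smoothTransition.one_of_one_le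
  have : ‖x‖ ^ 2 / R ^ 2 ≤ 1 := by
    rw [div_le_one (by positivity)]
    nlinarith [norm_nonneg x]
  linarith

lemma fderiv_cutoff_sq (R : ℝ) (x : EuclideanSpace ℝ (Fin n)) (k : Fin n) :
    fderiv ℝ (fun y => cutoff n R y ^ 2) x (EuclideanSpace.single k 1) =
      -(4 * cutoff n R x * deriv Real.smoothTransition (2 - ‖x‖ ^ 2 / R ^ 2) / R ^ 2 * x k) := by
  have h1 : HasFDerivAt (fun y : EuclideanSpace ℝ (Fin n) => ‖y‖ ^ 2)
      (2 • (innerSL ℝ x)) x := (hasStrictFDerivAt_norm_sq x).hasFDerivAt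
  have h2 := (h1.mul_const (R ^ 2)⁻¹).const_sub 2
  have h3 : HasDerivAt Real.smoothTransition
      (deriv Real.smoothTransition (2 - ‖x‖ ^ 2 * (R ^ 2)⁻¹)) (2 - ‖x‖ ^ 2 * (R ^ 2)⁻¹) :=
    ((Real.smoothTransition.contDiff (n := 1)).differentiable one_ne_zero _).hasDerivAt
  have h4 := (h3.comp_hasFDerivAt x h2).pow 2
  have h5 : HasFDerivAt (fun y => cutoff n R y ^ 2) _ x := h4
  rw [h5.fderiv]
  simp [cutoff, div_eq_mul_inv, EuclideanSpace.inner_single_right]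
  ring

/-! ### The Caccioppoli estimate -/

/-- Pointwise bound for the commutator `-∇(φ²) · V`: the drift part has a sign since `φ` is
radially nonincreasing, and the flux part is split by Young's inequality. -/
lemma neg_grad_cutoff_mul_energyField_le {lam Lam : ℝ} (hlam : 0 < lam) (hLam : 0 < Lam)
    (hell : UniformlyElliptic A lam Lam) {R : ℝ}
    (x : EuclideanSpace ℝ (Fin n)) {d : ℝ}
    (hd : d = deriv Real.smoothTransition (2 - ‖x‖ ^ 2 / R ^ 2)) (hd0 : 0 ≤ d) :
    ∑ k, -(fderiv ℝ (fun y => cutoff n R y ^ 2) x (EuclideanSpace.single k 1)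
        * energyField A w k x) ≤
      lam / 2 * (cutoff n R x ^ 2 * ∑ k, ‖pdC w x k‖ ^ 2)
        + Lam ^ 2 / (2 * lam) * (16 * d ^ 2 / R ^ 4 * ‖w x‖ ^ 2) * ‖x‖ ^ 2 := by
  have hφ : 0 ≤ cutoff n R x := Real.smoothTransition.nonneg _
  have hB : ∑ k, ‖flux A w k x‖ ^ 2 ≤ Lam ^ 2 * ∑ k, ‖pdC w x k‖ ^ 2 :=
    (hell x (fun k => pdC w x k)).2
  set φ := cutoff n R x with hφdef
  have term : ∀ k, -(fderiv ℝ (fun y => cutoff n R y ^ 2) x (EuclideanSpace.single k 1)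
      * energyField A w k x) ≤ lam / (2 * Lam ^ 2) * φ ^ 2 * ‖flux A w k x‖ ^ 2
        + Lam ^ 2 / (2 * lam) * (16 * d ^ 2 / R ^ 4 * ‖w x‖ ^ 2) * x k ^ 2 := by
    intro k
    rw [fderiv_cutoff_sq, ← hd, ← hφdef]
    set r := ((starRingEnd ℂ) (w x) * flux A w k x).re with hr
    have hV : energyField A w k x = r - 1 / 4 * x k * ‖w x‖ ^ 2 := by
      rw [energyField, mul_sub, Complex.sub_re, ← hr, Complex.sq_norm, Complex.normSq_apply]
      simp
      ring
    have hr2 : r ^ 2 ≤ (‖w x‖ * ‖flux A w k x‖) ^ 2 := by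
      rw [sq_le_sq, abs_of_nonneg (by positivity : 0 ≤ ‖w x‖ * ‖flux A w k x‖)]
      refine (Complex.abs_re_le_norm _).trans ?_
      simp
    have hneg : 0 ≤ φ * d / R ^ 2 * x k ^ 2 * ‖w x‖ ^ 2 := by positivity
    have hle : -(-(4 * φ * d / R ^ 2 * x k) * energyField A w k x)
        ≤ 4 * φ * d / R ^ 2 * x k * r := by
      rw [hV]
      have : -(-(4 * φ * d / R ^ 2 * x k) * (r - 1 / 4 * x k * ‖w x‖ ^ 2)) =
          4 * φ * d / R ^ 2 * x k * r - φ * d / R ^ 2 * x k ^ 2 * ‖w x‖ ^ 2 := by ring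
      linarith
    refine hle.trans ?_
    have habs : x k * r ≤ |x k| * (‖w x‖ * ‖flux A w k x‖) := by
      refine (le_abs_self _).trans ?_
      rw [abs_mul]
      exact mul_le_mul_of_nonneg_left (abs_le_of_sq_le_sq hr2 (by positivity))
        (abs_nonneg _)
    have hstep : 4 * φ * d / R ^ 2 * x k * r ≤
        (φ * ‖flux A w k x‖) * (4 * d / R ^ 2 * |x k| * ‖w x‖) := by
      have := mul_le_mul_of_nonneg_left habs (by positivity : 0 ≤ 4 * φ * d / R ^ 2)
      calc _ = 4 * φ * d / R ^ 2 * (x k * r) := by ring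
        _ ≤ _ := this
        _ = _ := by ring
    refine hstep.trans ?_
    set u := φ * ‖flux A w k x‖ with hu
    set v := 4 * d / R ^ 2 * |x k| * ‖w x‖ with hv
    have e1 : lam / (2 * Lam ^ 2) * φ ^ 2 * ‖flux A w k x‖ ^ 2 = lam / (2 * Lam ^ 2) * u ^ 2 := by
      rw [hu]; ring
    have e2 : Lam ^ 2 / (2 * lam) * (16 * d ^ 2 / R ^ 4 * ‖w x‖ ^ 2) * x k ^ 2
        = Lam ^ 2 / (2 * lam) * v ^ 2 := by
      rw [hv, ← sq_abs (x k)]; ring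
    rw [e1, e2]
    have e3 : lam / (2 * Lam ^ 2) * u ^ 2 + Lam ^ 2 / (2 * lam) * v ^ 2 - u * v =
        (lam * u - Lam ^ 2 * v) ^ 2 / (2 * lam * Lam ^ 2) := by
      field_simp; ring
    have : 0 ≤ (lam * u - Lam ^ 2 * v) ^ 2 / (2 * lam * Lam ^ 2) := by positivity
    linarith
  refine (Finset.sum_le_sum fun k _ => term k).trans ?_
  rw [Finset.sum_add_distrib, ← Finset.mul_sum, ← Finset.mul_sum, EuclideanSpace.real_norm_sq_eq]
  have := mul_le_mul_of_nonneg_left hB (by positivity : 0 ≤ lam / (2 * Lam ^ 2) * φ ^ 2)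
  have e : lam / (2 * Lam ^ 2) * φ ^ 2 * (Lam ^ 2 * ∑ k, ‖pdC w x k‖ ^ 2) =
      lam / 2 * (φ ^ 2 * ∑ k, ‖pdC w x k‖ ^ 2) := by
    field_simp
  linarith

/-- The error term is supported in `R ≤ |x| ≤ √2 R`, where the decay of `w` makes it
`O(R^{-2μ-2})`. Localizing to this annulus is what gives the rate: over the whole ball the
bound `|w|² ≲ (1+|x|)^{-2μ}` only integrates to `O(1)` when `2μ > n`. -/
lemma error_le {μ lam Lam M K R d : ℝ} (hμ : 0 ≤ μ) (hlam : 0 < lam)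
    (hM : 0 < M) (hR : 1 ≤ R) (x : EuclideanSpace ℝ (Fin n))
    (hd0 : 0 ≤ d) (hdK : d ≤ K)
    (hsupp : d ≠ 0 → 0 ≤ 2 - ‖x‖ ^ 2 / R ^ 2 ∧ 2 - ‖x‖ ^ 2 / R ^ 2 ≤ 1)
    (hwx : ‖w x‖ ≤ M * (1 + ‖x‖) ^ (-μ)) :
    Lam ^ 2 / (2 * lam) * (16 * d ^ 2 / R ^ 4 * ‖w x‖ ^ 2) * ‖x‖ ^ 2 ≤
      (Metric.ball (0 : EuclideanSpace ℝ (Fin n)) (2 * R)).indicator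
        (fun _ => 16 * Lam ^ 2 * K ^ 2 * M ^ 2 / lam * R ^ (-2 * μ - 2)) x := by
  have hR0 : 0 < R := by linarith
  have hc : 0 ≤ 16 * Lam ^ 2 * K ^ 2 * M ^ 2 / lam * R ^ (-2 * μ - 2) := by positivity
  by_cases hd : d = 0
  · rw [hd]
    simpa using Set.indicator_nonneg (fun _ _ => hc) x
  obtain ⟨h1, h2⟩ := hsupp hd
  have h1' : ‖x‖ ^ 2 ≤ 2 * R ^ 2 := by
    have : ‖x‖ ^ 2 / R ^ 2 ≤ 2 := by linarith
    rwa [div_le_iff₀ (by positivity)] at this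
  have h2' : R ≤ ‖x‖ := by
    have : 1 ≤ ‖x‖ ^ 2 / R ^ 2 := by linarith
    rw [le_div_iff₀ (by positivity)] at this
    nlinarith [norm_nonneg x]
  have hmem : x ∈ Metric.ball (0 : EuclideanSpace ℝ (Fin n)) (2 * R) := by
    rw [mem_ball_zero_iff]
    nlinarith [norm_nonneg x]
  rw [Set.indicator_of_mem hmem]
  have hw1 : ‖w x‖ ≤ M * R ^ (-μ) := by
    refine hwx.trans (mul_le_mul_of_nonneg_left ?_ hM.le)
    exact Real.rpow_le_rpow_of_nonpos hR0 (by linarith) (by linarith)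
  have hpow : R ^ (-2 * μ - 2) = (R ^ (-μ)) ^ 2 / R ^ 2 := by
    rw [Real.rpow_sub hR0, ← Real.rpow_natCast (R ^ (-μ)), ← Real.rpow_mul hR0.le,
      Real.rpow_two]
    congr 2
    push_cast; ring
  rw [hpow]
  have hw2 : ‖w x‖ ^ 2 ≤ M ^ 2 * (R ^ (-μ)) ^ 2 := by
    rw [← mul_pow]; gcongr
  have hd2 : d ^ 2 ≤ K ^ 2 := by gcongr
  calc Lam ^ 2 / (2 * lam) * (16 * d ^ 2 / R ^ 4 * ‖w x‖ ^ 2) * ‖x‖ ^ 2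
      ≤ Lam ^ 2 / (2 * lam) * (16 * K ^ 2 / R ^ 4 * (M ^ 2 * (R ^ (-μ)) ^ 2)) * (2 * R ^ 2) := by
        gcongr
    _ = _ := by field_simp

/-- The Caccioppoli inequality with the cutoff `φ = cutoff n R`, bounding the weighted energy by
the integral of the error term. -/
lemma energy_le {μ lam Lam M K R : ℝ} (hn : 1 ≤ n) (hμ : (n : ℝ) ≤ 2 * μ) (hlam : 0 < lam)
    (hLam : 0 < Lam) (hM : 0 < M) (hR : 1 ≤ R)
    (hK : ∀ t : ℝ, 0 ≤ deriv Real.smoothTransition t ∧ deriv Real.smoothTransition t ≤ K ∧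
      (deriv Real.smoothTransition t ≠ 0 → 0 ≤ t ∧ t ≤ 1))
    (hA : ∀ k l : Fin n, ContDiff ℝ 1 fun x => A x k l) (hell : UniformlyElliptic A lam Lam)
    (hw : ContDiff ℝ 2 w)
    (heq : ∀ x, divAgrad A w x =
      (1 / 2) * (Complex.I * w x + (μ : ℂ) * w x + ∑ k, (x k : ℂ) * pdC w x k))
    (hdec : ∀ x : EuclideanSpace ℝ (Fin n), ‖w x‖ ≤ M * (1 + ‖x‖) ^ (-μ)) :
    lam / 2 * ∫ x in Metric.ball (0 : EuclideanSpace ℝ (Fin n)) R, ∑ k, ‖pdC w x k‖ ^ 2 ≤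
      volume.real (Metric.ball (0 : EuclideanSpace ℝ (Fin n)) (2 * R)) *
        (16 * Lam ^ 2 * K ^ 2 * M ^ 2 / lam * R ^ (-2 * μ - 2)) := by
  have hR0 : 0 < R := by linarith
  set c := 16 * Lam ^ 2 * K ^ 2 * M ^ 2 / lam * R ^ (-2 * μ - 2) with hc
  set P : EuclideanSpace ℝ (Fin n) → ℝ := fun x => ∑ k, ‖pdC w x k‖ ^ 2 with hP
  set ψ : EuclideanSpace ℝ (Fin n) → ℝ := fun x => cutoff n R x ^ 2 with hψ
  have hPnn : ∀ x, 0 ≤ P x := fun x => by positivity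
  have hPc : Continuous P :=
    continuous_finsetSum _ fun k _ => ((contDiff_pdC hw k).continuous.norm.pow 2)
  have hψd : ContDiff ℝ 1 ψ := (contDiff_cutoff R).pow 2
  have hψc : HasCompactSupport ψ :=
    (hasCompactSupport_cutoff (n := n) hR0).comp_left (g := fun t : ℝ => t ^ 2) (by simp)
  have hψP : Integrable (fun x => ψ x * P x) :=
    (hψd.continuous.mul hPc).integrable_of_hasCompactSupport hψc.mul_right
  have hparts := fun k =>
    integral_mul_fderiv_compact hψd hψc (contDiff_energyField hA hw k) (EuclideanSpace.single k 1)
  have hD : Integrable ((Metric.ball (0 : EuclideanSpace ℝ (Fin n)) (2 * R)).indicator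
      fun _ => c) :=
    (integrableOn_const (measure_ball_lt_top.ne)).integrable_indicator measurableSet_ball
  have hident : ∫ x, ∑ k, ψ x * fderiv ℝ (energyField A w k) x (EuclideanSpace.single k 1) =
      ∫ x, ∑ k, -(fderiv ℝ ψ x (EuclideanSpace.single k 1) * energyField A w k x) := by
    simp only [Finset.sum_neg_distrib]
    rw [integral_neg, integral_finsetSum _ fun k _ => (hparts k).1,
      integral_finsetSum _ fun k _ => (hparts k).2.1, ← Finset.sum_neg_distrib]
    exact Finset.sum_congr rfl fun k _ => (hparts k).2.2
  have hlow : lam * ∫ x, ψ x * P x ≤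
      ∫ x, ∑ k, ψ x * fderiv ℝ (energyField A w k) x (EuclideanSpace.single k 1) := by
    rw [← integral_const_mul]
    refine integral_mono (hψP.const_mul _) (integrable_finsetSum _ fun k _ => (hparts k).1) ?_
    intro x
    have := mul_le_mul_of_nonneg_left (le_div_energyField hμ hA hell hw x (heq x))
      (by positivity : 0 ≤ ψ x)
    simp only [← Finset.mul_sum]
    calc lam * (ψ x * P x) = ψ x * (lam * P x) := by ring
      _ ≤ _ := this
  have hup : ∫ x, ∑ k, -(fderiv ℝ ψ x (EuclideanSpace.single k 1) * energyField A w k x) ≤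
      lam / 2 * (∫ x, ψ x * P x) +
        volume.real (Metric.ball (0 : EuclideanSpace ℝ (Fin n)) (2 * R)) * c := by
    have e : ∫ x, (Metric.ball (0 : EuclideanSpace ℝ (Fin n)) (2 * R)).indicator
        (fun _ => c) x = volume.real (Metric.ball (0 : EuclideanSpace ℝ (Fin n)) (2 * R)) * c := by
      rw [integral_indicator measurableSet_ball, setIntegral_const, smul_eq_mul]
    rw [← e, ← integral_const_mul, ← integral_add (hψP.const_mul _) hD]
    refine integral_mono (integrable_finsetSum _ fun k _ => (hparts k).2.1.neg)
      ((hψP.const_mul _).add hD) ?_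
    intro x
    obtain ⟨h0, h1, h2⟩ := hK (2 - ‖x‖ ^ 2 / R ^ 2)
    have hμ0 : 0 ≤ μ := by
      have : (1 : ℝ) ≤ n := by exact_mod_cast hn
      linarith
    exact (neg_grad_cutoff_mul_energyField_le hlam hLam hell x rfl h0).trans
      (add_le_add_right (error_le hμ0 hlam hM hR x h0 h1 h2 (hdec x)) _)
  have hball : ∫ x in Metric.ball (0 : EuclideanSpace ℝ (Fin n)) R, P x ≤ ∫ x, ψ x * P x := by
    have : ∫ x in Metric.ball (0 : EuclideanSpace ℝ (Fin n)) R, P x =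
        ∫ x in Metric.ball (0 : EuclideanSpace ℝ (Fin n)) R, ψ x * P x := by
      refine setIntegral_congr_fun measurableSet_ball fun x hx => ?_
      simp [hψ, cutoff_eq_one hR0 (mem_ball_zero_iff.mp hx)]
    rw [this]
    exact setIntegral_le_integral hψP (ae_of_all _ fun x => by
      have := hPnn x
      simp only [Pi.zero_apply, hψ]
      positivity)
  have := mul_le_mul_of_nonneg_left hball (by positivity : 0 ≤ lam / 2)
  linarith

end

/-- quantitative step in the proof of the Liouville theorem: if `2μ ≥ n`
and `w` solves the self-similar profile equation with `|w(x)| ≤ M(1+|x|)^{-μ}`, then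
`∫_{B_R} |∇w|² ≤ C' R^{n-2μ-2}` for all `R ≥ 1`, with `C' = C'(n, μ, λ, Λ, M)`. -/
theorem stmt_17 (n : ℕ) (hn : 1 ≤ n) (μ : ℝ) (hμ : (n : ℝ) ≤ 2 * μ)
    (lam Lam M : ℝ) (hlam : 0 < lam) (hLam : 0 < Lam) (hM : 0 < M) :
    ∃ C' : ℝ, 0 < C' ∧
      ∀ (A : EuclideanSpace ℝ (Fin n) → Matrix (Fin n) (Fin n) ℂ)
        (w : EuclideanSpace ℝ (Fin n) → ℂ),
        (∀ k l : Fin n, ContDiff ℝ 1 fun x => A x k l) →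
        UniformlyElliptic A lam Lam →
        ContDiff ℝ 2 w →
        (∀ x, divAgrad A w x =
          (1 / 2) * (Complex.I * w x + (μ : ℂ) * w x + ∑ k, (x k : ℂ) * pdC w x k)) →
        (∀ x : EuclideanSpace ℝ (Fin n), ‖w x‖ ≤ M * (1 + ‖x‖) ^ (-μ)) →
        ∀ R : ℝ, 1 ≤ R →
          (∫ x in Metric.ball (0 : EuclideanSpace ℝ (Fin n)) R, ∑ k, ‖pdC w x k‖ ^ 2) ≤
            C' * R ^ ((n : ℝ) - 2 * μ - 2) := by
  obtain ⟨K, hK0, hK⟩ := smoothTransition_deriv_facts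
  have hb : 0 < volume.real (Metric.ball (0 : EuclideanSpace ℝ (Fin n)) 1) :=
    ENNReal.toReal_pos (Metric.measure_ball_pos volume _ one_pos).ne' measure_ball_lt_top.ne
  refine ⟨2 / lam * (2 ^ n * volume.real (Metric.ball (0 : EuclideanSpace ℝ (Fin n)) 1) *
    (16 * Lam ^ 2 * K ^ 2 * M ^ 2 / lam)), by positivity, ?_⟩
  intro A w hA hell hw heq hdec R hR
  have hR0 : 0 < R := by linarith
  have h := energy_le hn hμ hlam hLam hM hR hK hA hell hw heq hdec
  have hvol : volume.real (Metric.ball (0 : EuclideanSpace ℝ (Fin n)) (2 * R)) =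
      (2 * R) ^ n * volume.real (Metric.ball (0 : EuclideanSpace ℝ (Fin n)) 1) := by
    rw [measureReal_def, Measure.addHaar_ball_of_pos _ _ (by positivity : 0 < 2 * R),
      ENNReal.toReal_mul, finrank_euclideanSpace_fin,
      ENNReal.toReal_ofReal (by positivity), measureReal_def]
  have hpow : R ^ ((n : ℝ) - 2 * μ - 2) = R ^ n * R ^ (-2 * μ - 2) := by
    rw [← Real.rpow_natCast, ← Real.rpow_add hR0]
    congr 1; ring
  rw [hvol] at h
  rw [hpow]
  calc _ = 2 / lam * (lam / 2 *
        ∫ x in Metric.ball (0 : EuclideanSpace ℝ (Fin n)) R, ∑ k, ‖pdC w x k‖ ^ 2) := by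
        field_simp
    _ ≤ _ := mul_le_mul_of_nonneg_left h (by positivity)
    _ = _ := by rw [mul_pow]; ring
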